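/- arXiv:1605.07960 — 2 statements merged into one kernel-verified Lean document; each statement's English description precedes it below -/
import Mathlib

section
/- For all natural numbers m and n, one has ∑_{i=0}^{min{m,n}} C(m, i) · C(n, i) · i! ≥ (max{m,n} / e)^{min{m,n}}, where e is Euler's number and C(n, k) denotes the binomial coefficient. -/
/-!
The last term `i = min m n` alone suffices: with `k = min m n` and `N = max m n` it equals
`N (N - 1) ⋯ (N - k + 1)`. Since `(N - i) / (k - i) ≥ N / k` for `0 ≤ i < k`, this product is at
least `(N / k) ^ k * k!`, and `k! ≥ (k / e) ^ k` because `k ^ k / k!` is one term of the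
exponential series of `e ^ k`.
-/

open scoped Nat

theorem pow_mul_descFactorial_le_pow_mul_descFactorial {k n : ℕ} (hkn : k ≤ n) (j : ℕ) :
    n ^ j * k.descFactorial j ≤ k ^ j * n.descFactorial j := by
  have mul_sub_le (i : ℕ) : n * (k - i) ≤ k * (n - i) := by
    rw [Nat.mul_sub, Nat.mul_sub, Nat.mul_comm k n]
    gcongr
  calc n ^ j * k.descFactorial j = ∏ i ∈ Finset.range j, n * (k - i) := by
        rw [Nat.descFactorial_eq_prod_range, Finset.prod_mul_distrib, Finset.prod_const,
          Finset.card_range]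
    _ ≤ ∏ i ∈ Finset.range j, k * (n - i) := Finset.prod_le_prod' fun i _ ↦ mul_sub_le i
    _ = k ^ j * n.descFactorial j := by
        rw [Nat.descFactorial_eq_prod_range, Finset.prod_mul_distrib, Finset.prod_const,
          Finset.card_range]

theorem div_exp_one_pow_le_factorial (n : ℕ) : ((n : ℝ) / Real.exp 1) ^ n ≤ n ! := by
  have pow_div_le : (n : ℝ) ^ n / n ! ≤ Real.exp 1 ^ n := by
    rw [Real.exp_one_pow]
    exact Real.pow_div_factorial_le_exp _ n.cast_nonneg n
  rw [div_pow]
  exact (div_le_comm₀ (by positivity) (by positivity)).mp pow_div_le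

theorem div_exp_one_pow_le_descFactorial {k n : ℕ} (hkn : k ≤ n) :
    ((n : ℝ) / Real.exp 1) ^ k ≤ n.descFactorial k := by
  have pow_self_pos : (0 : ℝ) < (k : ℝ) ^ k := mod_cast Nat.pow_self_pos
  refine le_of_mul_le_mul_left ?_ pow_self_pos
  calc (k : ℝ) ^ k * ((n : ℝ) / Real.exp 1) ^ k = (n : ℝ) ^ k * ((k : ℝ) / Real.exp 1) ^ k := by
        rw [div_pow, div_pow, mul_div_left_comm]
    _ ≤ (n : ℝ) ^ k * k ! := by gcongr; exact div_exp_one_pow_le_factorial k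
    _ = (n : ℝ) ^ k * k.descFactorial k := by rw [Nat.descFactorial_self]
    _ ≤ (k : ℝ) ^ k * n.descFactorial k :=
        mod_cast pow_mul_descFactorial_le_pow_mul_descFactorial hkn k

theorem choose_min_mul_choose_min_mul_factorial (m n : ℕ) :
    m.choose (min m n) * n.choose (min m n) * (min m n)! =
      (max m n).descFactorial (min m n) := by
  rw [Nat.descFactorial_eq_factorial_mul_choose]
  rcases le_total m n with hmn | hnm
  · rw [min_eq_left hmn, max_eq_right hmn, Nat.choose_self, one_mul, mul_comm]
  · rw [min_eq_right hnm, max_eq_left hnm, Nat.choose_self, mul_one, mul_comm]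

/-- The number of terms of the full observation function satisfies
`∑ i ≤ min m n, C(m, i) · C(n, i) · i! ≥ (max m n / e) ^ (min m n)`. -/
theorem stmt_8 (m n : ℕ) :
    ((∑ i ∈ Finset.range (min m n + 1),
          m.choose i * n.choose i * i.factorial : ℕ) : ℝ) ≥
      ((max m n : ℝ) / Real.exp 1) ^ (min m n) := by
  have descFactorial_le_sum : (max m n).descFactorial (min m n) ≤
      ∑ i ∈ Finset.range (min m n + 1), m.choose i * n.choose i * i.factorial := by
    rw [← choose_min_mul_choose_min_mul_factorial]
    exact Finset.single_le_sum (f := fun i ↦ m.choose i * n.choose i * i.factorial)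
      (fun _ _ ↦ Nat.zero_le _) (Finset.self_mem_range_succ _)
  calc ((max m n : ℝ) / Real.exp 1) ^ (min m n)
      = (((max m n : ℕ) : ℝ) / Real.exp 1) ^ (min m n) := by rw [Nat.cast_max]
    _ ≤ (max m n).descFactorial (min m n) := div_exp_one_pow_le_descFactorial min_le_max
    _ ≤ _ := mod_cast descFactorial_le_sum
end

section
/- Let a, b : ℕ → ℝ be antitone (nonincreasing) functions with nonnegative values, and define the value of a pair (i, j) ∈ ℕ × ℕ as v(i, j) = a(i) · b(j). Suppose Q : ℕ → Finset (ℕ × ℕ) and p : ℕ → ℕ × ℕ satisfy, for every k: (1) p(k) ∈ Q(k) and v(p(k)) ≥ v(q) for all q ∈ Q(k) (the popped element maximizes the value over the queue), and (2) Q(k+1) ⊆ (Q(k) \ {p(k)}) ∪ {(p(k).1 + 1, p(k).2), (p(k).1, p(k).2 + 1)} (after popping, only the two successors of the popped pair may be inserted). Then for every k, v(p(k+1)) ≤ v(p(k)); that is, the sequence of popped values is nonincreasing. -/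
theorem antitone_fst_mul_snd {ι κ R : Type*} [Preorder ι] [Preorder κ] [Mul R] [Zero R]
    [Preorder R] [PosMulMono R] [MulPosMono R] {a : ι → R} {b : κ → R}
    (ha : Antitone a) (hb : Antitone b) (ha0 : ∀ i, 0 ≤ a i) (hb0 : ∀ j, 0 ≤ b j) :
    Antitone fun q : ι × κ ↦ a q.1 * b q.2 :=
  fun x y hxy ↦ mul_le_mul (ha hxy.1) (hb hxy.2) (hb0 y.2) (ha0 x.1)

theorem pair_succ_subset_Ici {ι κ : Type*} [Preorder ι] [SuccOrder ι] [Preorder κ] [SuccOrder κ]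
    (x : ι × κ) : {(Order.succ x.1, x.2), (x.1, Order.succ x.2)} ⊆ Set.Ici x :=
  Set.pair_subset ⟨Order.le_succ x.1, le_rfl⟩ ⟨le_rfl, Order.le_succ x.2⟩

theorem stmt_10_general {α β : Type*} [Preorder α] [Preorder β] {v : α → β} (hv : Antitone v)
    {Q : ℕ → Set α} {p : ℕ → α} (hmem : ∀ k, p k ∈ Q k) (hmax : ∀ k, IsMaxOn v (Q k) (p k))
    (hins : ∀ k, Q (k + 1) ⊆ Q k ∪ Set.Ici (p k)) : Antitone (v ∘ p) := by
  refine antitone_nat_of_succ_le fun k ↦ ?_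
  rcases hins k (hmem (k + 1)) with old | above
  · exact hmax k old
  · exact hv above

/-- Abstract priority-queue argument: if `a`, `b` are nonnegative antitone sequences,
each popped pair `p k` maximizes the value `a i · b j` over the current queue `Q k`,
and after popping only the two index-successors of the popped pair may be inserted,
then the sequence of popped values is nonincreasing. -/
theorem stmt_10 (a b : ℕ → ℝ) (ha : Antitone a) (hb : Antitone b)
    (ha0 : ∀ i, 0 ≤ a i) (hb0 : ∀ j, 0 ≤ b j)
    (Q : ℕ → Finset (ℕ × ℕ)) (p : ℕ → ℕ × ℕ)
    (hmem : ∀ k, p k ∈ Q k)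
    (hmax : ∀ k, ∀ q ∈ Q k, a q.1 * b q.2 ≤ a (p k).1 * b (p k).2)
    (hins : ∀ k, Q (k + 1) ⊆
      (Q k \ {p k}) ∪ {((p k).1 + 1, (p k).2), ((p k).1, (p k).2 + 1)}) :
    ∀ k, a (p (k + 1)).1 * b (p (k + 1)).2 ≤ a (p k).1 * b (p k).2 := by
  have inserted_above (k : ℕ) : (Q (k + 1) : Set (ℕ × ℕ)) ⊆ Q k ∪ Set.Ici (p k) := by
    refine (Finset.coe_subset.mpr (hins k)).trans ?_
    push_cast
    exact Set.union_subset_union Set.sdiff_subset (pair_succ_subset_Ici (p k))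
  have value_antitone := antitone_fst_mul_snd ha hb ha0 hb0
  exact fun k ↦ stmt_10_general value_antitone hmem hmax inserted_above k.le_succ
end
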